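/- Let L, M, M' be finite reflexive path graphs, f : M → L and f' : M' → L epimorphisms, and suppose m_- (resp. m'_-) is an endpoint of M (resp. M') with tp^{m_-}(f) = tp^{m'_-}(f') as L-types. Then there exist a finite reflexive path graph O, an endpoint o_- of O, and epimorphisms g : O → M, g' : O → M' with f ∘ g = f' ∘ g', g(o_-) = m_-, and g'(o_-) = m'_-. -/

import Mathlib

/-- Adjacency in a reflexive path graph on `ℕ`: `|x - y| ≤ 1`. -/
def adjPath (x y : ℕ) : Prop := x ≤ y + 1 ∧ y ≤ x + 1

/-- `f` is an epimorphism from the reflexive path graph on `[0, nA)` onto the one on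
`[0, nB)`. -/
def IsPathEpi (nA nB : ℕ) (f : ℕ → ℕ) : Prop :=
  (∀ a, a < nA → f a < nB) ∧
  (∀ x y, x < nA → y < nA → adjPath x y → adjPath (f x) (f y)) ∧
  (∀ b b', b < nB → b' < nB → adjPath b b' →
    ∃ x y, x < nA ∧ y < nA ∧ adjPath x y ∧ f x = b ∧ f y = b')

/-- The type of the endpoint `0` of `[0, nM)` with respect to `f`: the family of images
of initial subintervals containing `0`. -/
def tpZero (nM : ℕ) (f : ℕ → ℕ) : Set (Set ℕ) :=
  { S | ∃ k, 1 ≤ k ∧ k ≤ nM ∧ S = f '' Set.Iio k }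

def Bw (p x q : ℕ) : Prop := (p ≤ x ∧ x ≤ q) ∨ (q ≤ x ∧ x ≤ p)

def Wk (n : ℕ) (f : ℕ → ℕ) : Prop := ∀ x, x + 1 < n → f x ≤ f (x+1) + 1 ∧ f (x+1) ≤ f x + 1

def Rl (n n' : ℕ) (f f' : ℕ → ℕ) (a b : ℕ × ℕ) : Prop :=
  (a.1 < n ∧ b.1 < n ∧ a.2 < n' ∧ b.2 < n') ∧ adjPath a.1 b.1 ∧ adjPath a.2 b.2 ∧
    f a.1 = f' a.2 ∧ f b.1 = f' b.2

def Rc (n n' : ℕ) (f f' : ℕ → ℕ) : ℕ × ℕ → ℕ × ℕ → Prop := Relation.ReflTransGen (Rl n n' f f')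

theorem Rl_symm {n n' f f'} {a b : ℕ × ℕ} (h : Rl n n' f f' a b) : Rl n n' f f' b a := by
  unfold Rl adjPath at *
  omega

theorem Rc_symm {n n' f f'} {a b : ℕ × ℕ} (h : Rc n n' f f' a b) : Rc n n' f f' b a := by
  induction h with
  | refl => exact Relation.ReflTransGen.refl
  | tail _ h2 ih => exact Relation.ReflTransGen.head (Rl_symm h2) ih

theorem Rc_swap {n n' f f'} {a b : ℕ × ℕ} (h : Rc n n' f f' a b) :
    Rc n' n f' f (a.2, a.1) (b.2, b.1) := by
  induction h with
  | refl => exact Relation.ReflTransGen.refl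
  | tail _ h2 ih =>
    refine Relation.ReflTransGen.tail ih ?_
    unfold Rl at *
    obtain ⟨⟨h1, h2, h3, h4⟩, h5, h6, h7, h8⟩ := h2
    exact ⟨⟨h3, h4, h1, h2⟩, h6, h5, h7.symm, h8.symm⟩

theorem ivt_aux {n f} (hw : Wk n f) (c x d : ℕ) (hd : x + d < n)
    (h : Bw (f x) c (f (x+d))) : ∃ z, x ≤ z ∧ z ≤ x + d ∧ f z = c := by
  induction d with
  | zero =>
    refine ⟨x, le_rfl, by omega, ?_⟩
    unfold Bw at h
    simp only [Nat.add_zero] at h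
    omega
  | succ d ih =>
    by_cases hc : f (x + (d+1)) = c
    · exact ⟨x + (d+1), by omega, le_rfl, hc⟩
    · have h1 := hw (x+d) (by omega)
      rw [show x + d + 1 = x + (d+1) by ring] at h1
      obtain ⟨z, h2, h3, h4⟩ := ih (by omega) (by unfold Bw at *; omega)
      exact ⟨z, h2, by omega, h4⟩

theorem ivt {n f} (hw : Wk n f) {c p q : ℕ} (hp : p < n) (hq : q < n)
    (h : Bw (f p) c (f q)) : ∃ z, Bw p z q ∧ f z = c := by
  rcases le_total p q with h1 | h1
  · obtain ⟨d, rfl⟩ := Nat.exists_eq_add_of_le h1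
    obtain ⟨z, h2, h3, h4⟩ := ivt_aux hw c p d hq h
    exact ⟨z, by unfold Bw; omega, h4⟩
  · obtain ⟨d, rfl⟩ := Nat.exists_eq_add_of_le h1
    obtain ⟨z, h2, h3, h4⟩ := ivt_aux hw c q d hp (by unfold Bw at *; omega)
    exact ⟨z, by unfold Bw; omega, h4⟩

theorem mem_uIcc_Bw {p x q : ℕ} : x ∈ Finset.uIcc p q ↔ Bw p x q := by
  unfold Bw
  rw [Finset.mem_uIcc']

/-- closest point to `q` with value `c` -/
theorem closest {n f} (hw : Wk n f) {c p q : ℕ} (hp : p < n) (hq : q < n)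
    (hb : ∀ x, Bw p x q → Bw (f p) (f x) (f q))
    (h : Bw (f p) c (f q)) : ∃ z, Bw p z q ∧ f z = c ∧ ∀ x, Bw z x q → Bw c (f x) (f q) := by
  obtain ⟨z0, hz0, hz0'⟩ := ivt hw hp hq h
  obtain ⟨z, hz, hmin⟩ := Finset.exists_min_image
    ((Finset.uIcc p q).filter (fun z => f z = c)) (fun z => (z - q) + (q - z))
    ⟨z0, by simp only [Finset.mem_filter, mem_uIcc_Bw]; exact ⟨hz0, hz0'⟩⟩
  simp only [Finset.mem_filter, mem_uIcc_Bw] at hz hmin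
  refine ⟨z, hz.1, hz.2, fun x hx => ?_⟩
  by_contra hcon
  have h1 := hb x (by have := hz.1; unfold Bw at *; omega)
  have h2 : Bw (f x) c (f q) := by unfold Bw at *; omega
  obtain ⟨z2, h3, h4⟩ := ivt hw (by have := hz.1; unfold Bw at *; omega) hq h2
  have h5 := hmin z2 ⟨by have := hz.1; unfold Bw at *; omega, h4⟩
  have h6 : z2 = z := by have := hz.1; unfold Bw at *; omega
  have h7 : x = z := by have := hz.1; unfold Bw at *; omega
  subst h7
  have := hz.2
  unfold Bw at *; omega

/-- point farthest in value from `v` -/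
theorem farthest (f : ℕ → ℕ) (r q u v : ℕ) (hb : ∀ x, Bw r x q → Bw u (f x) v) :
    ∃ s, Bw r s q ∧ ∀ x, Bw r x q → Bw (f s) (f x) v := by
  obtain ⟨s, hs, hmax⟩ := Finset.exists_max_image (Finset.uIcc r q)
    (fun x => (f x - v) + (v - f x)) ⟨r, by simp⟩
  simp only [mem_uIcc_Bw] at hs hmax
  refine ⟨s, hs, fun x hx => ?_⟩
  have h1 := hmax x hx
  have h2 := hb x hx
  have h3 := hb s hs
  unfold Bw at h2 h3 ⊢
  omega

def MCs (n n' : ℕ) (f f' : ℕ → ℕ) (N : ℕ) : Prop :=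
  ∀ p q p' q', (p - q) + (q - p) + ((p' - q') + (q' - p')) < N → p < n → q < n → p' < n' → q' < n' →
    f p = f' p' → f q = f' q' → (∀ x, Bw p x q → Bw (f p) (f x) (f q)) →
    (∀ x, Bw p' x q' → Bw (f p) (f' x) (f q)) → Rc n n' f f' (p, p') (q, q')

theorem MCs_swap {n n' f f' N} (h : MCs n n' f f' N) : MCs n' n f' f N := by
  intro p q p' q' h1 h2 h3 h4 h5 h6 h7 h8 h9
  exact Rc_swap (h p' q' p q (by omega) h4 h5 h2 h3 h6.symm h7.symm
    (by rwa [← h6, ← h7]) (by rwa [← h6, ← h7]))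

theorem Bw_symm {p x q : ℕ} : Bw p x q ↔ Bw q x p := by unfold Bw; omega

theorem MC_hit {n n' f f'} (hw' : Wk n' f') {p q p' q' : ℕ}
    (IH : MCs n n' f f' ((p - q) + (q - p) + ((p' - q') + (q' - p'))))
    (hp : p < n) (hq : q < n) (hp' : p' < n') (hq' : q' < n')
    (e1 : f p = f' p') (e2 : f q = f' q') (hb : ∀ x, Bw p x q → Bw (f p) (f x) (f q))
    (hb' : ∀ x, Bw p' x q' → Bw (f p) (f' x) (f q))
    (r : ℕ) (hr : Bw p r q) (hrp : r ≠ p) (hrq : r ≠ q) (hv : f r = f q) :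
    Rc n n' f f' (p, p') (q, q') := by
  have hrn : r < n := by unfold Bw at hr; omega
  have a1 : Rc n n' f f' (p, p') (r, q') := by
    refine IH p r p' q' (by unfold Bw at hr; omega) hp hrn hp' hq' e1 (by omega) ?_ ?_
    · intro x hx
      rw [hv]; exact hb x (by unfold Bw at *; omega)
    · rw [hv]; exact hb'
  obtain ⟨s, hs, hfar⟩ := farthest f r q (f p) (f q)
    (fun x hx => hb x (by unfold Bw at *; omega))
  have hsn : s < n := by unfold Bw at hs; omega
  obtain ⟨s', hs', es', hcl⟩ := closest hw' (c := f s) hp' hq'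
    (by rw [← e1, ← e2]; exact hb')
    (by rw [← e1, ← e2]; exact hb s (by unfold Bw at *; omega))
  have hsn' : s' < n' := by unfold Bw at hs'; omega
  rw [← e2] at hcl
  have a2 : Rc n n' f f' (s, s') (r, q') := by
    refine IH s r s' q' (by unfold Bw at hr hs hs'; omega) hsn hrn hsn' hq' es'.symm (by omega) ?_ ?_
    · intro x hx
      rw [hv]; exact hfar x (by unfold Bw at hr hs hx ⊢; omega)
    · rw [hv]; exact hcl
  have a3 : Rc n n' f f' (s, s') (q, q') := by
    refine IH s q s' q' (by unfold Bw at hr hs hs'; omega) hsn hq hsn' hq' es'.symm e2 ?_ hcl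
    intro x hx
    exact hfar x (by unfold Bw at hr hs hx ⊢; omega)
  exact a1.trans ((Rc_symm a2).trans a3)

theorem MC_hit2 {n n' f f'} (hw' : Wk n' f') {p q p' q' : ℕ}
    (IH : MCs n n' f f' ((p - q) + (q - p) + ((p' - q') + (q' - p'))))
    (hp : p < n) (hq : q < n) (hp' : p' < n') (hq' : q' < n')
    (e1 : f p = f' p') (e2 : f q = f' q') (hb : ∀ x, Bw p x q → Bw (f p) (f x) (f q))
    (hb' : ∀ x, Bw p' x q' → Bw (f p) (f' x) (f q))
    (r : ℕ) (hr : Bw p r q) (hrp : r ≠ p) (hrq : r ≠ q) (hv : f r = f p ∨ f r = f q) :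
    Rc n n' f f' (p, p') (q, q') := by
  rcases hv with hv | hv
  · apply Rc_symm
    refine MC_hit hw' ?_ hq hp hq' hp' e2 e1 (fun x hx => Bw_symm.1 (hb x (Bw_symm.1 hx)))
      (fun x hx => Bw_symm.1 (hb' x (Bw_symm.1 hx))) r (Bw_symm.1 hr) hrq hrp hv
    convert IH using 1
    omega
  · exact MC_hit hw' IH hp hq hp' hq' e1 e2 hb hb' r hr hrp hrq hv

/-- next point from `p` towards `q` -/
theorem next_pt {n f} (hw : Wk n f) {p q : ℕ} (hp : p < n) (hq : q < n) (h : p ≠ q) :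
    ∃ r, Bw p r q ∧ adjPath p r ∧ r ≠ p ∧ f p ≤ f r + 1 ∧ f r ≤ f p + 1 := by
  rcases lt_or_gt_of_ne h with h | h
  · have := hw p (by omega)
    exact ⟨p+1, by unfold Bw; omega, by unfold adjPath; omega, by omega, by omega, by omega⟩
  · have := hw (p-1) (by omega)
    rw [show p - 1 + 1 = p by omega] at this
    exact ⟨p-1, by unfold Bw; omega, by unfold adjPath; omega, by omega, by omega, by omega⟩

theorem MC {n n' f f'} (hw : Wk n f) (hw' : Wk n' f') (N : ℕ) : MCs n n' f f' N := by
  induction N with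
  | zero => intro p q p' q' h; omega
  | succ N ih =>
    intro p q p' q' h hp hq hp' hq' e1 e2 hb hb'
    have IH : MCs n n' f f' ((p - q) + (q - p) + ((p' - q') + (q' - p'))) := by
      intro a b a' b' hh
      exact ih a b a' b' (by omega)
    by_cases c1 : ∃ r, Bw p r q ∧ r ≠ p ∧ r ≠ q ∧ (f r = f p ∨ f r = f q)
    · obtain ⟨r, h1, h2, h3, h4⟩ := c1
      exact MC_hit2 hw' IH hp hq hp' hq' e1 e2 hb hb' r h1 h2 h3 h4
    by_cases c2 : ∃ r, Bw p' r q' ∧ r ≠ p' ∧ r ≠ q' ∧ (f' r = f' p' ∨ f' r = f' q')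
    · obtain ⟨r, h1, h2, h3, h4⟩ := c2
      refine Rc_swap (MC_hit2 (f := f') (f' := f) hw ?_ hp' hq' hp hq e1.symm e2.symm
        (by rw [← e1, ← e2]; exact hb') (by rw [← e1, ← e2]; exact hb) r h1 h2 h3 h4)
      convert MCs_swap IH using 1
      omega
    by_cases c3 : adjPath p q ∧ adjPath p' q'
    · exact Relation.ReflTransGen.single ⟨⟨hp, hq, hp', hq'⟩, c3.1, c3.2, e1, e2⟩
    have key : ¬ (f p ≤ f q + 1 ∧ f q ≤ f p + 1) := by
      intro hk
      apply c3
      constructor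
      · by_contra hcon
        obtain ⟨r, h1, h2, h3, -⟩ := next_pt hw hp hq (by unfold adjPath at hcon; omega)
        refine c1 ⟨r, h1, h3, by rintro rfl; exact hcon h2, ?_⟩
        have := hb r h1
        unfold Bw at this; omega
      · by_contra hcon
        obtain ⟨r, h1, h2, h3, -⟩ := next_pt hw' hp' hq' (by unfold adjPath at hcon; omega)
        refine c2 ⟨r, h1, h3, by rintro rfl; exact hcon h2, ?_⟩
        have := hb' r h1
        unfold Bw at this; omega
    obtain ⟨r, h1, h2, h3, h4, h5⟩ := next_pt hw hp hq (by rintro rfl; omega)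
    obtain ⟨r', h1', h2', h3', h4', h5'⟩ := next_pt hw' hp' hq' (by rintro rfl; omega)
    have hrq : r ≠ q := by rintro rfl; omega
    have hrq' : r' ≠ q' := by rintro rfl; omega
    have n1 : ¬ (f r = f p ∨ f r = f q) := fun hh => c1 ⟨r, h1, h3, hrq, hh⟩
    have n1' : ¬ (f' r' = f' p' ∨ f' r' = f' q') := fun hh => c2 ⟨r', h1', h3', hrq', hh⟩
    have b1 := hb r h1
    have b1' := hb' r' h1'
    have er : f r = f' r' := by unfold Bw at b1 b1'; omega
    have hrn : r < n := by unfold Bw at h1; omega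
    have hrn' : r' < n' := by unfold Bw at h1'; omega
    refine Relation.ReflTransGen.head (b := (r, r')) ⟨⟨hp, hrn, hp', hrn'⟩, h2, h2', e1, er⟩ ?_
    refine IH r q r' q' (by unfold Bw at h1 h1'; omega) hrn hq hrn' hq' er e2 ?_ ?_
    · intro x hx
      have i1 := hb x (by unfold Bw at *; omega)
      by_cases hxq : x = q
      · subst hxq; unfold Bw; omega
      have : ¬ (f x = f p ∨ f x = f q) := fun hh =>
        c1 ⟨x, by unfold Bw at *; omega, by unfold Bw at h1 hx; omega, hxq, hh⟩
      unfold Bw at i1 b1 ⊢; omega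
    · intro x hx
      have i1 := hb' x (by unfold Bw at *; omega)
      by_cases hxq : x = q'
      · subst hxq; unfold Bw; omega
      have : ¬ (f' x = f' p' ∨ f' x = f' q') := fun hh =>
        c2 ⟨x, by unfold Bw at *; omega, by unfold Bw at h1' hx; omega, hxq, hh⟩
      unfold Bw at i1 b1 ⊢; omega

theorem MC' {n n' f f'} (hw : Wk n f) (hw' : Wk n' f') {p q p' q' : ℕ}
    (hp : p < n) (hq : q < n) (hp' : p' < n') (hq' : q' < n')
    (e1 : f p = f' p') (e2 : f q = f' q') (hb : ∀ x, Bw p x q → Bw (f p) (f x) (f q))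
    (hb' : ∀ x, Bw p' x q' → Bw (f p) (f' x) (f q)) : Rc n n' f f' (p, p') (q, q') :=
  MC hw hw' _ p q p' q' (Nat.lt_succ_self _) hp hq hp' hq' e1 e2 hb hb'

theorem lift {n n' f f'} (hw : Wk n f) (hw' : Wk n' f') (N : ℕ) : ∀ p q p' q',
    (p - q) + (q - p) < N → p < n → q < n → p' < n' → q' < n' → f p = f' p' →
    (∀ x, Bw p x q → Bw (f' p') (f x) (f' q')) →
    (∀ x, Bw p' x q' → Bw (f' p') (f' x) (f' q')) → ∃ b, b < n' ∧ Rc n n' f f' (p, p') (q, b) := by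
  induction N with
  | zero => intro p q p' q' h; omega
  | succ N ih =>
    intro p q p' q' h hp hq hp' hq' e1 hb hb'
    obtain ⟨s, hs, hfar⟩ := farthest f p q (f' q') (f' p') (fun x hx => Bw_symm.1 (hb x hx))
    have hsn : s < n := by unfold Bw at hs; omega
    by_cases hsp : f s = f p
    · refine ⟨p', hp', MC' hw hw' hp hq hp' hp' e1 ?_ ?_ ?_⟩
      · have := hfar q (by unfold Bw; omega)
        unfold Bw at this; omega
      · intro x hx
        have := hfar x hx
        unfold Bw at *; omega
      · intro x hx
        have : x = p' := by unfold Bw at hx; omega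
        subst this
        unfold Bw; omega
    · obtain ⟨s', hs', es', hcl⟩ := closest hw' (c := f s) hq' hp'
        (fun x hx => Bw_symm.1 (hb' x (Bw_symm.1 hx))) (Bw_symm.1 (hb s hs))
      have hsn' : s' < n' := by unfold Bw at hs'; omega
      have a1 : Rc n n' f f' (p, p') (s, s') := by
        refine MC' hw hw' hp hsn hp' hsn' e1 es'.symm ?_ ?_
        · intro x hx
          rw [e1]
          exact Bw_symm.1 (hfar x (by unfold Bw at *; omega))
        · intro x hx
          rw [e1]
          exact Bw_symm.1 (hcl x (Bw_symm.1 hx))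
      have hne : s ≠ p := by rintro rfl; exact hsp rfl
      obtain ⟨b, hbn, a2⟩ := ih s q s' p' (by unfold Bw at hs; omega) hsn hq hsn' hp' es'.symm
        (by intro x hx
            rw [es']
            exact hfar x (by unfold Bw at *; omega))
        (by rw [es']; exact hcl)
      exact ⟨b, hbn, a1.trans a2⟩

def ExtV (k : ℕ) (f : ℕ → ℕ) (v : ℕ) : Prop := (∀ x, x < k → f x ≤ v) ∨ (∀ x, x < k → v ≤ f x)

def ImEq (k k' : ℕ) (f f' : ℕ → ℕ) : Prop :=
  (∀ x, x < k → ∃ y, y < k' ∧ f' y = f x) ∧ (∀ y, y < k' → ∃ x, x < k ∧ f x = f' y)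

theorem exists_max (f : ℕ → ℕ) (k : ℕ) (hk : 1 ≤ k) : ∃ s, s < k ∧ ∀ x, x < k → f x ≤ f s := by
  obtain ⟨s, hs, h⟩ := Finset.exists_max_image (Finset.range k) f ⟨0, by simp; omega⟩
  exact ⟨s, by simpa using hs, fun x hx => h x (by simpa using hx)⟩

theorem exists_min (f : ℕ → ℕ) (k : ℕ) (hk : 1 ≤ k) : ∃ s, s < k ∧ ∀ x, x < k → f s ≤ f x := by
  obtain ⟨s, hs, h⟩ := Finset.exists_min_image (Finset.range k) f ⟨0, by simp; omega⟩
  exact ⟨s, by simpa using hs, fun x hx => h x (by simpa using hx)⟩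

/-- pair at one extreme and pair at the other -/
theorem opp {n n' f f'} (hw : Wk n f) (hw' : Wk n' f') {k k' : ℕ} (hk : k ≤ n) (hk' : k' ≤ n')
    (him : ImEq k k' f f') {p q p' q' : ℕ} (hp : p < k) (hq : q < k) (hp' : p' < k') (hq' : q' < k')
    (e1 : f p = f' p') (e2 : f q = f' q') (hlo : ∀ x, x < k → f p ≤ f x)
    (hhi : ∀ x, x < k → f x ≤ f q) : Rc n n' f f' (p, p') (q, q') := by
  refine MC' hw hw' (by omega) (by omega) (by omega) (by omega) e1 e2 ?_ ?_
  · intro x hx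
    have hxk : x < k := by unfold Bw at hx; omega
    exact Or.inl ⟨hlo x hxk, hhi x hxk⟩
  · intro x hx
    obtain ⟨y, hy, ey⟩ := him.2 x (by unfold Bw at hx; omega)
    rw [← ey]
    exact Or.inl ⟨hlo y hy, hhi y hy⟩

theorem ext_conn {n n' f f'} (hw : Wk n f) (hw' : Wk n' f') {k k' : ℕ} (hk : k ≤ n) (hk' : k' ≤ n')
    (him : ImEq k k' f f') {p q p' q' : ℕ} (hp : p < k) (hq : q < k) (hp' : p' < k') (hq' : q' < k')
    (e1 : f p = f' p') (e2 : f q = f' q') (h1 : ExtV k f (f p)) (h2 : ExtV k f (f q)) :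
    Rc n n' f f' (p, p') (q, q') := by
  obtain ⟨s, hs, hs2⟩ := exists_max f k (by omega)
  obtain ⟨t, ht, ht2⟩ := exists_min f k (by omega)
  obtain ⟨s', hs', es'⟩ := him.1 s hs
  obtain ⟨t', ht', et'⟩ := him.1 t ht
  have main : ∀ p p', p < k → p' < k' → f p = f' p' → ExtV k f (f p) →
      Rc n n' f f' (p, p') (s, s') := by
    intro p p' hp hp' e1 h1
    rcases h1 with h1 | h1
    · exact (Rc_symm (opp hw hw' hk hk' him ht hp ht' hp' et'.symm e1 ht2 h1)).trans
        (opp hw hw' hk hk' him ht hs ht' hs' et'.symm es'.symm ht2 hs2)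
    · exact opp hw hw' hk hk' him hp hs hp' hs' e1 es'.symm h1 hs2
  exact (main p p' hp hp' e1 h1).trans (Rc_symm (main q q' hq hq' e2 h2))

theorem avoid {n f} (hw : Wk n f) {t c : ℕ} (ht : t < n) (ht1 : 1 ≤ t)
    (hav : ∀ x, x < t → f x ≠ c) (hc : f t = c) :
    (f (t-1) + 1 = c ∧ ∀ x, x < t → f x < c) ∨ (f (t-1) = c + 1 ∧ ∀ x, x < t → c < f x) := by
  have h1 := hw (t-1) (by omega)
  rw [show t - 1 + 1 = t by omega] at h1
  have h2 := hav (t-1) (by omega)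
  have h3 : ∀ x, x < t → ¬ Bw (f x) c (f (t-1)) := by
    intro x hx hb
    obtain ⟨z, hz, hz2⟩ := ivt hw (by omega) (by omega) hb
    exact hav z (by unfold Bw at hz; omega) hz2
  rcases lt_or_gt_of_ne h2 with h | h
  · refine Or.inl ⟨by omega, fun x hx => ?_⟩
    have := h3 x hx
    unfold Bw at this; omega
  · refine Or.inr ⟨by omega, fun x hx => ?_⟩
    have := h3 x hx
    unfold Bw at this; omega

/-- last new element -/
theorem last_new (f : ℕ → ℕ) (k : ℕ) (hk : 1 ≤ k) :
    ∃ t, t < k ∧ (∀ x, x < k → ∃ y, y ≤ t ∧ f y = f x) ∧ ∀ x, x < t → f x ≠ f t := by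
  induction k with
  | zero => omega
  | succ k ih =>
    by_cases h : ∀ x, x < k → f x ≠ f k
    · exact ⟨k, by omega, fun x hx => ⟨x, by omega, rfl⟩, h⟩
    · push Not at h
      obtain ⟨x0, hx0, e0⟩ := h
      obtain ⟨t, h1, h2, h3⟩ := ih (by omega)
      refine ⟨t, by omega, fun x hx => ?_, h3⟩
      by_cases hxk : x = k
      · subst hxk
        rw [← e0]
        exact h2 x0 hx0
      · exact h2 x (by omega)

theorem claim {n n' f f'} (hw : Wk n f) (hw' : Wk n' f')
    (ht1 : ∀ k, 1 ≤ k → k ≤ n → ∃ k', 1 ≤ k' ∧ k' ≤ n' ∧ ImEq k k' f f')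
    (ht2 : ∀ k', 1 ≤ k' → k' ≤ n' → ∃ k, 1 ≤ k ∧ k ≤ n ∧ ImEq k k' f f') (N : ℕ) :
    ∀ k k', k < N → 1 ≤ k → k ≤ n → 1 ≤ k' → k' ≤ n' → ImEq k k' f f' →
    ∀ p p', p < k → p' < k' → f p = f' p' → ExtV k f (f p) → Rc n n' f f' (0,0) (p, p') := by
  induction N with
  | zero => intro k k' h; omega
  | succ N ih =>
    intro k k' hN hk1 hkn hk1' hkn' him p p' hp hp' e1 hE
    obtain ⟨t, htk, hcov, hnew⟩ := last_new f k hk1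
    obtain ⟨t', htk', hcov', hnew'⟩ := last_new f' k' hk1'
    by_cases h0 : t = 0
    · subst h0
      have hconst : ∀ x, x < k → f x = f 0 := by
        intro x hx
        obtain ⟨y, hy, ey⟩ := hcov x hx
        rw [← ey, show y = 0 by omega]
      obtain ⟨x, hx, ex⟩ := him.2 0 (by omega)
      refine ext_conn hw hw' hkn hkn' him (by omega) hp (by omega) hp' ?_ e1 ?_ hE
      · rw [← ex, hconst x hx]
      · exact Or.inl fun x hx => (hconst x hx).le
    by_cases h0' : t' = 0
    · exfalso
      subst h0'
      have hconst : ∀ x, x < k' → f' x = f' 0 := by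
        intro x hx
        obtain ⟨y, hy, ey⟩ := hcov' x hx
        rw [← ey, show y = 0 by omega]
      obtain ⟨x, hx, ex⟩ := him.1 0 (by omega)
      obtain ⟨y, hy, ey⟩ := him.1 t htk
      apply hnew 0 (by omega)
      rw [← ex, ← ey, hconst x hx, hconst y hy]
    -- images of the proper initial parts agree
    have i1 : ∀ x, x < t → ∃ y, y < t' ∧ f' y = f x := by
      obtain ⟨j, hj1, hj2, hj3⟩ := ht1 t (by omega) (by omega)
      have hjt : j ≤ t' := by
        by_contra hcon
        obtain ⟨y, hy, ey⟩ := him.1 t htk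
        obtain ⟨z, hz, ez⟩ := hcov' y hy
        obtain ⟨w, hw1, hw2⟩ := hj3.2 z (by omega)
        exact hnew w hw1 (by omega)
      intro x hx
      obtain ⟨y, hy, ey⟩ := hj3.1 x hx
      exact ⟨y, by omega, ey⟩
    have i2 : ∀ x, x < t' → ∃ y, y < t ∧ f y = f' x := by
      obtain ⟨j, hj1, hj2, hj3⟩ := ht2 t' (by omega) (by omega)
      have hjt : j ≤ t := by
        by_contra hcon
        obtain ⟨y, hy, ey⟩ := him.2 t' htk'
        obtain ⟨z, hz, ez⟩ := hcov y hy
        obtain ⟨w, hw1, hw2⟩ := hj3.1 z (by omega)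
        exact hnew' w hw1 (by omega)
      intro x hx
      obtain ⟨y, hy, ey⟩ := hj3.2 x hx
      exact ⟨y, by omega, ey⟩
    have et : f t = f' t' := by
      obtain ⟨y, hy, ey⟩ := him.1 t htk
      obtain ⟨z, hz, ez⟩ := hcov' y hy
      by_cases hzt : z = t'
      · subst hzt; omega
      · obtain ⟨w, hw1, hw2⟩ := i2 z (by omega)
        exact absurd (by omega) (hnew w hw1)
    have av := avoid hw (t := t) (by omega) (by omega) hnew rfl
    have av' := avoid hw' (t := t') (by omega) (by omega) hnew' rfl
    obtain ⟨y0, hy0, ey0⟩ := i1 (t-1) (by omega)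
    have e3 : f (t-1) = f' (t'-1) := by
      rcases av with ⟨a1, a2⟩ | ⟨a1, a2⟩ <;> rcases av' with ⟨b1, b2⟩ | ⟨b1, b2⟩
      · omega
      · have := b2 y0 hy0; omega
      · have := b2 y0 hy0; omega
      · omega
    have hE3 : ExtV t f (f (t-1)) := by
      rcases av with ⟨a1, a2⟩ | ⟨a1, a2⟩
      · exact Or.inl fun x hx => by have := a2 x hx; omega
      · exact Or.inr fun x hx => by have := a2 x hx; omega
    have hE4 : ExtV k f (f t) := by
      rcases av with ⟨a1, a2⟩ | ⟨a1, a2⟩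
      · refine Or.inl fun x hx => ?_
        obtain ⟨y, hy, ey⟩ := hcov x hx
        rcases Nat.lt_or_ge y t with h | h
        · have := a2 y h; omega
        · have : y = t := by omega
          subst this; omega
      · refine Or.inr fun x hx => ?_
        obtain ⟨y, hy, ey⟩ := hcov x hx
        rcases Nat.lt_or_ge y t with h | h
        · have := a2 y h; omega
        · have : y = t := by omega
          subst this; omega
    have r1 := ih t t' (by omega) (by omega) (by omega) (by omega) (by omega) ⟨i1, i2⟩
      (t-1) (t'-1) (by omega) (by omega) e3 hE3
    have r2 : Rl n n' f f' (t-1, t'-1) (t, t') := by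
      refine ⟨⟨?_, ?_, ?_, ?_⟩, ?_, ?_, e3, et⟩ <;> simp only [adjPath] <;> omega
    exact (r1.tail r2).trans (ext_conn hw hw' hkn hkn' him htk hp htk' hp' et e1 hE4 hE)

/-- reach the last vertex on the first side -/
theorem reach_end {n n' f f'} (hw : Wk n f) (hw' : Wk n' f') (hn : 1 ≤ n) (hn' : 1 ≤ n')
    (him : ImEq n n' f f')
    (ht1 : ∀ k, 1 ≤ k → k ≤ n → ∃ k', 1 ≤ k' ∧ k' ≤ n' ∧ ImEq k k' f f')
    (ht2 : ∀ k', 1 ≤ k' → k' ≤ n' → ∃ k, 1 ≤ k ∧ k ≤ n ∧ ImEq k k' f f') :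
    ∃ b, b < n' ∧ Rc n n' f f' (0,0) (n-1, b) := by
  obtain ⟨s, hs, hs2⟩ := exists_max f n hn
  obtain ⟨t, ht, ht2'⟩ := exists_min f n hn
  obtain ⟨s', hs', es'⟩ := him.1 s hs
  obtain ⟨t', ht', et'⟩ := him.1 t ht
  have r1 := claim hw hw' ht1 ht2 _ n n' (Nat.lt_succ_self n) hn le_rfl hn' le_rfl him s s' hs hs'
    es'.symm (Or.inl hs2)
  obtain ⟨b, hb, r2⟩ := lift hw hw' _ s (n-1) s' t' (Nat.lt_succ_self _) hs (by omega) hs' ht'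
    es'.symm
    (by intro x hx
        have hxn : x < n := by unfold Bw at hx; omega
        have := hs2 x hxn
        have := ht2' x hxn
        unfold Bw; omega)
    (by intro x hx
        have hxn : x < n' := by unfold Bw at hx; omega
        obtain ⟨y, hy, ey⟩ := him.2 x hxn
        have := hs2 y hy
        have := ht2' y hy
        unfold Bw; omega)
  exact ⟨b, hb, r1.trans r2⟩

theorem Rc_walk {n n' f f'} {a b : ℕ × ℕ} (h : Rc n n' f f' a b) :
    ∃ (l : ℕ) (w : ℕ → ℕ × ℕ), w 0 = a ∧ w l = b ∧ ∀ i, i < l → Rl n n' f f' (w i) (w (i+1)) := by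
  induction h with
  | refl => exact ⟨0, fun _ => a, rfl, rfl, by intro i hi; omega⟩
  | @tail b c _ h2 ih =>
    obtain ⟨l, w, h0, hl, hs⟩ := ih
    refine ⟨l+1, fun i => if i ≤ l then w i else c, by simpa using h0, by simp, ?_⟩
    intro i hi
    by_cases hil : i < l
    · simp only [hil.le, if_true, show i + 1 ≤ l by omega]
      exact hs i hil
    · have : i = l := by omega
      subst this
      simpa [hl] using h2

theorem epi_of {n m : ℕ} {g : ℕ → ℕ} (hw : Wk n g) (hlt : ∀ i, i < n → g i < m) {i j : ℕ}
    (hi : i < n) (hj : j < n) (h0 : g i = 0) (h1 : g j = m - 1) : IsPathEpi n m g := by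
  have adj : ∀ x y, x < n → y < n → adjPath x y → adjPath (g x) (g y) := by
    intro x y hx hy h
    unfold adjPath at *
    rcases Nat.lt_trichotomy x y with h3 | h3 | h3
    · obtain rfl : y = x + 1 := by omega
      exact hw x hy
    · subst h3; omega
    · obtain rfl : x = y + 1 := by omega
      have := hw y hx
      omega
  have edge : ∀ b, b + 1 < m → ∃ x y, x < n ∧ y < n ∧ adjPath x y ∧ g x = b ∧ g y = b + 1 := by
    intro b hb
    -- closest point to `j` with value `b`
    obtain ⟨z0, hz0, ez0⟩ := ivt hw (c := b) hi hj (by unfold Bw; omega)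
    obtain ⟨z, hz, hmin⟩ := Finset.exists_min_image
      ((Finset.uIcc i j).filter (fun z => g z = b)) (fun z => (z - j) + (j - z))
      ⟨z0, by simp only [Finset.mem_filter, mem_uIcc_Bw]; exact ⟨hz0, ez0⟩⟩
    simp only [Finset.mem_filter, mem_uIcc_Bw] at hz hmin
    obtain ⟨hz, ez⟩ := hz
    have hzn : z < n := by unfold Bw at hz; omega
    obtain ⟨r, h2, h3, h4, h5, h6⟩ := next_pt hw hzn hj (by rintro rfl; omega)
    have hrn : r < n := by unfold Bw at h2; omega
    refine ⟨z, r, hzn, hrn, h3, ez, ?_⟩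
    by_contra hcon
    obtain ⟨y, hy, ey⟩ := ivt hw (c := b) hrn hj (by unfold Bw; omega)
    have := hmin y ⟨by unfold Bw at *; omega, ey⟩
    unfold Bw at *; omega
  refine ⟨hlt, adj, ?_⟩
  intro b b' hb hb' h
  unfold adjPath at h
  rcases Nat.lt_trichotomy b b' with h3 | h3 | h3
  · obtain rfl : b' = b + 1 := by omega
    exact edge b hb'
  · subst h3
    obtain ⟨z, hz, ez⟩ := ivt hw (c := b) hi hj (by unfold Bw; omega)
    have : z < n := by unfold Bw at hz; omega
    exact ⟨z, z, this, this, by unfold adjPath; omega, ez, ez⟩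
  · obtain rfl : b = b' + 1 := by omega
    obtain ⟨x, y, h4, h5, h6, h7, h8⟩ := edge b' hb
    exact ⟨y, x, h5, h4, by unfold adjPath at *; omega, h8, h7⟩

theorem imEq_of {k k' : ℕ} {f f' : ℕ → ℕ} (h : f '' Set.Iio k = f' '' Set.Iio k') :
    ImEq k k' f f' := by
  constructor
  · intro x hx
    have : f x ∈ f' '' Set.Iio k' := h ▸ ⟨x, hx, rfl⟩
    exact this
  · intro x hx
    have : f' x ∈ f '' Set.Iio k := h ▸ ⟨x, hx, rfl⟩
    exact this

theorem ImEq_symm {k k' : ℕ} {f f' : ℕ → ℕ} (h : ImEq k k' f f') : ImEq k' k f' f := ⟨h.2, h.1⟩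

/-- One-endpoint amalgamation with equal types (the `moreover` clause of the
Solecki–Tsankov amalgamation lemma). -/
theorem stmt13 (nL nM nM' : ℕ) (hnL : 1 ≤ nL) (hnM : 1 ≤ nM) (hnM' : 1 ≤ nM')
    (f f' : ℕ → ℕ)
    (hf : IsPathEpi nM nL f) (hf' : IsPathEpi nM' nL f')
    (htp : tpZero nM f = tpZero nM' f') :
    ∃ (nO : ℕ) (g g' : ℕ → ℕ), 1 ≤ nO ∧
      IsPathEpi nO nM g ∧ IsPathEpi nO nM' g' ∧
      (∀ j, j < nO → f (g j) = f' (g' j)) ∧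
      g 0 = 0 ∧ g' 0 = 0 := by
  have hw : Wk nM f := fun x hx => hf.2.1 x (x+1) (by omega) hx (by unfold adjPath; omega)
  have hw' : Wk nM' f' := fun x hx => hf'.2.1 x (x+1) (by omega) hx (by unfold adjPath; omega)
  have ht1 : ∀ k, 1 ≤ k → k ≤ nM → ∃ k', 1 ≤ k' ∧ k' ≤ nM' ∧ ImEq k k' f f' := by
    intro k h1 h2
    have : f '' Set.Iio k ∈ tpZero nM' f' := htp ▸ ⟨k, h1, h2, rfl⟩
    obtain ⟨k', h3, h4, h5⟩ := this
    exact ⟨k', h3, h4, imEq_of h5⟩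
  have ht2 : ∀ k', 1 ≤ k' → k' ≤ nM' → ∃ k, 1 ≤ k ∧ k ≤ nM ∧ ImEq k k' f f' := by
    intro k h1 h2
    have : f' '' Set.Iio k ∈ tpZero nM f := htp ▸ ⟨k, h1, h2, rfl⟩
    obtain ⟨k', h3, h4, h5⟩ := this
    exact ⟨k', h3, h4, imEq_of h5.symm⟩
  have him : ImEq nM nM' f f' := by
    constructor
    · intro x hx
      obtain ⟨y, _, hy, _, _, ey, _⟩ := hf'.2.2 (f x) (f x) (hf.1 x hx) (hf.1 x hx)
        (by unfold adjPath; omega)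
      exact ⟨y, hy, ey⟩
    · intro x hx
      obtain ⟨y, _, hy, _, _, ey, _⟩ := hf.2.2 (f' x) (f' x) (hf'.1 x hx) (hf'.1 x hx)
        (by unfold adjPath; omega)
      exact ⟨y, hy, ey⟩
  have e0 : f 0 = f' 0 := by
    obtain ⟨k, h1, h2, h3⟩ := ht1 1 le_rfl hnM
    obtain ⟨x, hx, ex⟩ := h3.2 0 (by omega)
    obtain rfl : x = 0 := by omega
    exact ex
  obtain ⟨b, hb, r1⟩ := reach_end hw hw' hnM hnM' him ht1 ht2
  obtain ⟨a, ha, r2⟩ := reach_end hw' hw hnM' hnM (ImEq_symm him)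
    (fun k h1 h2 => by
      obtain ⟨j, h3, h4, h5⟩ := ht2 k h1 h2
      exact ⟨j, h3, h4, ImEq_symm h5⟩)
    (fun k h1 h2 => by
      obtain ⟨j, h3, h4, h5⟩ := ht1 k h1 h2
      exact ⟨j, h3, h4, ImEq_symm h5⟩)
  have r3 := Rc_swap r2
  simp only at r3
  obtain ⟨l1, w1, s1, t1, st1⟩ := Rc_walk r1
  obtain ⟨l2, w2, s2, t2, st2⟩ := Rc_walk ((Rc_symm r1).trans r3)
  -- concatenation
  let w : ℕ → ℕ × ℕ := fun i => if i ≤ l1 then w1 i else w2 (i - l1)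
  have w_0 : w 0 = (0, 0) := by simp [w, s1]
  have w_1 : w l1 = (nM - 1, b) := by simp [w, t1]
  have w_2 : w (l1 + l2) = (a, nM' - 1) := by
    by_cases h : l2 = 0
    · subst h
      simp only [w, Nat.add_zero, le_refl, if_true]
      rw [t1, ← s2, t2]
    · simp only [w, show ¬ (l1 + l2 ≤ l1) by omega, if_false, Nat.add_sub_cancel_left]
      exact t2
  have wst : ∀ i, i < l1 + l2 → Rl nM nM' f f' (w i) (w (i+1)) := by
    intro i hi
    rcases Nat.lt_trichotomy i l1 with h | h | h
    · simp only [w, h.le, show i + 1 ≤ l1 by omega, if_true]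
      exact st1 i h
    · subst h
      rw [w_1, ← s2]
      simp only [w, show ¬ (i + 1 ≤ i) by omega, if_false, Nat.add_sub_cancel_left]
      exact st2 0 (by omega)
    · simp only [w, show ¬ (i ≤ l1) by omega, show ¬ (i + 1 ≤ l1) by omega, if_false]
      rw [show i + 1 - l1 = (i - l1) + 1 by omega]
      exact st2 (i - l1) (by omega)
  have good : ∀ i, i < l1 + l2 + 1 → (w i).1 < nM ∧ (w i).2 < nM' ∧ f (w i).1 = f' (w i).2 := by
    intro i hi
    cases i with
    | zero => rw [w_0]; exact ⟨hnM, hnM', e0⟩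
    | succ i =>
      have := wst i (by omega)
      exact ⟨this.1.2.1, this.1.2.2.2, this.2.2.2.2⟩
  refine ⟨l1 + l2 + 1, fun i => (w i).1, fun i => (w i).2, by omega, ?_, ?_,
    fun j hj => (good j hj).2.2, by simp [w_0], by simp [w_0]⟩
  · refine epi_of (i := 0) (j := l1) ?_ (fun i hi => (good i hi).1) (by omega) (by omega)
      (by simp [w_0]) (by simp [w_1])
    intro x hx
    exact (wst x (by omega)).2.1
  · refine epi_of (i := 0) (j := l1 + l2) ?_ (fun i hi => (good i hi).2.1) (by omega) (by omega)
      (by simp [w_0]) (by simp [w_2])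
    intro x hx
    exact (wst x (by omega)).2.2.1
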